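/- Let T₁ and T₂ be two commuting contractions on a complex Hilbert space H such that neither T₁ nor T₂ has 1 as an eigenvalue. Then there exist a complex Hilbert space G containing H (via an isometric embedding) and two commuting isometries U₁, U₂ on G such that T₁^m T₂^n = P_H U₁^m U₂^n|_H for all m,n ∈ ℕ, and neither U₁ nor U₂ has 1 as an eigenvalue. -/

import Mathlib

open ContinuousLinearMap

/-- A bounded operator commuting with an isometry `U` preserves the orthogonal complement of the
fixed space of `U`. -/
theorem inner_apply_eq_zero_of_commute_isometry
    {G : Type*} [NormedAddCommGroup G] [InnerProductSpace ℂ G] [CompleteSpace G]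
    {U W : G →L[ℂ] G} (hU : ∀ x, ‖U x‖ = ‖x‖) (hUW : U ∘L W = W ∘L U)
    {x : G} (hx : ∀ m, U m = m → inner ℂ m x = 0) {m : G} (hm : U m = m) :
    inner ℂ m (W x) = 0 := by
  have hUU : adjoint U ∘L U = 1 := (norm_map_iff_adjoint_comp_self U).1 hU
  have hfix : adjoint U m = m := by
    conv_lhs => rw [← hm]
    exact congr($hUU m)
  have hcomm : adjoint W ∘L adjoint U = adjoint U ∘L adjoint W := by
    rw [← adjoint_comp, hUW, adjoint_comp]
  have hstar : adjoint U (adjoint W m) = adjoint W m := by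
    have := congr($hcomm m)
    simpa [hfix] using this.symm
  have hWm : U (adjoint W m) = adjoint W m := by
    rw [← sub_eq_zero, ← norm_eq_zero, ← sq_eq_zero_iff, @norm_sub_sq ℂ, hU,
      ← adjoint_inner_right, hstar, inner_self_eq_norm_sq]
    ring
  rw [← adjoint_inner_left]
  exact hx _ hWm

/-- A norm-preserving correspondence `α h ↦ β h` between subspaces of a Hilbert space `L` extends
to a unitary operator on `L ⊕ L`. -/
theorem exists_linearIsometryEquiv_extending
    {V L : Type*} [NormedAddCommGroup V] [NormedSpace ℂ V]
    [NormedAddCommGroup L] [InnerProductSpace ℂ L] [CompleteSpace L]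
    (α β : V →ₗ[ℂ] L) (hαβ : ∀ v, ‖α v‖ = ‖β v‖) :
    ∃ g : WithLp 2 (L × L) ≃ₗᵢ[ℂ] WithLp 2 (L × L),
      ∀ v, g (WithLp.toLp 2 (α v, 0)) = WithLp.toLp 2 (β v, 0) := by
  let A := (LinearMap.range α).topologicalClosure
  let B := (LinearMap.range β).topologicalClosure
  have dense (γ : V →ₗ[ℂ] L) : DenseRange (γ.codRestrict (LinearMap.range γ).topologicalClosure
      fun v => Submodule.le_topologicalClosure _ ⟨v, rfl⟩) := by
    intro x
    rw [closure_subtype]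
    have hx := x.2
    rw [← SetLike.mem_coe, Submodule.topologicalClosure_coe] at hx
    refine closure_mono ?_ hx
    rintro _ ⟨v, rfl⟩
    exact ⟨_, ⟨v, rfl⟩, rfl⟩
  let φ : A ≃ₗᵢ[ℂ] B := (LinearEquiv.refl ℂ V).extendOfIsometry _ _ (dense α) (dense β)
    fun v => (hαβ v).symm
  have hφ (v : V) : φ ⟨α v, Submodule.le_topologicalClosure _ ⟨v, rfl⟩⟩ =
      ⟨β v, Submodule.le_topologicalClosure _ ⟨v, rfl⟩⟩ :=
    LinearEquiv.extendOfIsometry_eq (LinearEquiv.refl ℂ V) _ _ (dense α) (dense β)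
      (fun v => (hαβ v).symm) v
  have : CompleteSpace A := (Submodule.isClosed_topologicalClosure _).completeSpace_coe
  have : CompleteSpace B := (Submodule.isClosed_topologicalClosure _).completeSpace_coe
  let eA := A.orthogonalDecomposition
  let eB := B.orthogonalDecomposition
  let e : WithLp 2 (L × L) ≃ₗ[ℂ] WithLp 2 (L × L) :=
    { toFun := fun x => WithLp.toLp 2
        (eB.symm (WithLp.toLp 2 (φ (eA x.fst).fst, (eB x.snd).snd)),
          eA.symm (WithLp.toLp 2 (φ.symm (eB x.snd).fst, (eA x.fst).snd)))
      invFun := fun y => WithLp.toLp 2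
        (eA.symm (WithLp.toLp 2 (φ.symm (eB y.fst).fst, (eA y.snd).snd)),
          eB.symm (WithLp.toLp 2 (φ (eA y.snd).fst, (eB y.fst).snd)))
      map_add' := fun x y => by
        refine WithLp.ofLp_injective 2 (Prod.ext (eB.injective ?_) (eA.injective ?_)) <;>
          exact WithLp.ofLp_injective 2 (Prod.ext (by simp) (by simp))
      map_smul' := fun c x => by
        refine WithLp.ofLp_injective 2 (Prod.ext (eB.injective ?_) (eA.injective ?_)) <;>
          exact WithLp.ofLp_injective 2 (Prod.ext (by simp) (by simp))
      left_inv := fun x => by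
        refine WithLp.ofLp_injective 2 (Prod.ext (eA.injective ?_) (eB.injective ?_)) <;>
          exact WithLp.ofLp_injective 2 (Prod.ext (by simp) (by simp))
      right_inv := fun x => by
        refine WithLp.ofLp_injective 2 (Prod.ext (eB.injective ?_) (eA.injective ?_)) <;>
          exact WithLp.ofLp_injective 2 (Prod.ext (by simp) (by simp)) }
  refine ⟨⟨e, fun x => ?_⟩, fun v => ?_⟩
  · rw [← sq_eq_sq₀ (norm_nonneg _) (norm_nonneg _)]
    change ‖WithLp.toLp 2
        (eB.symm (WithLp.toLp 2 (φ (eA x.fst).fst, (eB x.snd).snd)),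
          eA.symm (WithLp.toLp 2 (φ.symm (eB x.snd).fst, (eA x.fst).snd)))‖ ^ 2 = ‖x‖ ^ 2
    have hA : ‖x.fst‖ ^ 2 = ‖(eA x.fst).fst‖ ^ 2 + ‖(eA x.fst).snd‖ ^ 2 := by
      rw [← WithLp.prod_norm_sq_eq_of_L2, LinearIsometryEquiv.norm_map]
    have hB : ‖x.snd‖ ^ 2 = ‖(eB x.snd).fst‖ ^ 2 + ‖(eB x.snd).snd‖ ^ 2 := by
      rw [← WithLp.prod_norm_sq_eq_of_L2, LinearIsometryEquiv.norm_map]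
    rw [WithLp.prod_norm_sq_eq_of_L2 x, hA, hB]
    simp only [WithLp.prod_norm_sq_eq_of_L2, WithLp.toLp_fst, WithLp.toLp_snd,
      LinearIsometryEquiv.norm_map]
    ring
  · have hA : eA (α v) = WithLp.toLp 2
        (⟨α v, Submodule.le_topologicalClosure _ ⟨v, rfl⟩⟩, 0) := by
      rw [← eA.eq_symm_apply]
      simp [eA]
    have hB : WithLp.toLp 2 (⟨β v, Submodule.le_topologicalClosure _ ⟨v, rfl⟩⟩, 0) =
        eB (β v) := by
      rw [← eB.symm_apply_eq]
      simp [eB]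
    have h0 : eA.symm (WithLp.toLp 2 (0, 0)) = 0 := eA.symm.map_zero
    change WithLp.toLp 2 (eB.symm (WithLp.toLp 2 (φ (eA (α v)).fst, (eB 0).snd)),
      eA.symm (WithLp.toLp 2 (φ.symm (eB 0).fst, (eA (α v)).snd))) = _
    simp [hA, hφ, hB, h0]

/-- A contraction has a defect operator. -/
theorem exists_defect {H : Type*} [NormedAddCommGroup H] [InnerProductSpace ℂ H] [CompleteSpace H]
    (T : H →L[ℂ] H) (hT : ‖T‖ ≤ 1) :
    ∃ D : H →L[ℂ] H, ∀ h, ‖T h‖ ^ 2 + ‖D h‖ ^ 2 = ‖h‖ ^ 2 := by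
  have hpos : 0 ≤ 1 - star T * T :=
    sub_nonneg.2 (CStarAlgebra.norm_le_one_iff_of_nonneg (star T * T) (star_mul_self_nonneg T) |>.1
      (by rw [CStarRing.norm_star_mul_self]; exact mul_le_one₀ hT (norm_nonneg _) hT))
  obtain ⟨D, hD⟩ := CStarAlgebra.nonneg_iff_eq_star_mul_self.1 hpos
  refine ⟨D, fun h => ?_⟩
  have key := congr(RCLike.re (inner ℂ ($hD h) h))
  simp only [sub_apply, mul_apply_eq_comp, one_apply_eq_self, star_eq_adjoint, inner_sub_left,
    adjoint_inner_left, map_sub, inner_self_eq_norm_sq] at key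
  linarith

theorem lp_two_hasSum_norm_sq {E : Type*} [NormedAddCommGroup E]
    (x : lp (fun _ : ℕ => E) 2) :
    HasSum (fun n => ‖x n‖ ^ 2) (‖x‖ ^ 2) := by
  simpa using lp.hasSum_norm (p := 2) (by norm_num) x

theorem memℓp_two_of_summable {E : Type*} [NormedAddCommGroup E] {x : ℕ → E}
    (hx : Summable fun n => ‖x n‖ ^ 2) :
    Memℓp x 2 :=
  memℓp_gen (by simpa using hx)

section Model

variable {H E : Type*} [NormedAddCommGroup H] [InnerProductSpace ℂ H]
  [NormedAddCommGroup E] [InnerProductSpace ℂ E]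

/-- The sequence `Q x₀ + J h, Q x₁ + R x₀, Q x₂ + R x₁, …`. -/
def blockStep (Q R : E →ₗ[ℂ] E) (J : H →ₗ[ℂ] E) (h : H) (x : ℕ → E) : ℕ → E
  | 0 => Q (x 0) + J h
  | n + 1 => Q (x (n + 1)) + R (x n)

/-- The conditions under which `(h, x) ↦ (T h, blockStep Q R J h x)` is an isometry. -/
structure IsIsometricBlock (T : H →ₗ[ℂ] H) (Q R : E →ₗ[ℂ] E) (J : H →ₗ[ℂ] E) : Prop where
  norm_QR : ∀ x y, ‖Q x + R y‖ ^ 2 = ‖Q x‖ ^ 2 + ‖R y‖ ^ 2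
  norm_QJ : ∀ x h, ‖Q x + J h‖ ^ 2 = ‖Q x‖ ^ 2 + ‖J h‖ ^ 2
  norm_E : ∀ x, ‖Q x‖ ^ 2 + ‖R x‖ ^ 2 = ‖x‖ ^ 2
  norm_H : ∀ h, ‖T h‖ ^ 2 + ‖J h‖ ^ 2 = ‖h‖ ^ 2

theorem IsIsometricBlock.hasSum {T : H →ₗ[ℂ] H} {Q R : E →ₗ[ℂ] E} {J : H →ₗ[ℂ] E}
    (hB : IsIsometricBlock T Q R J) (h : H) (x : lp (fun _ : ℕ => E) 2) :
    HasSum (fun n => ‖blockStep Q R J h x n‖ ^ 2) (‖J h‖ ^ 2 + ‖x‖ ^ 2) := by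
  have hx := lp_two_hasSum_norm_sq x
  have hQ : Summable fun n => ‖Q (x n)‖ ^ 2 := hx.summable.of_nonneg_of_le
    (fun _ => by positivity) fun n => by
      nlinarith [hB.norm_E (x n), sq_nonneg ‖R (x n)‖]
  have hR : Summable fun n => ‖R (x n)‖ ^ 2 := hx.summable.of_nonneg_of_le
    (fun _ => by positivity) fun n => by
      nlinarith [hB.norm_E (x n), sq_nonneg ‖Q (x n)‖]
  have hsum : ‖x‖ ^ 2 = ∑' n, ‖Q (x n)‖ ^ 2 + ∑' n, ‖R (x n)‖ ^ 2 := by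
    rw [← hx.tsum_eq, ← hQ.tsum_add hR]
    simp only [hB.norm_E]
  let c : ℕ → ℝ := fun n => Nat.casesOn n (‖J h‖ ^ 2) fun k => ‖R (x k)‖ ^ 2
  have hc : HasSum c (‖J h‖ ^ 2 + ∑' n, ‖R (x n)‖ ^ 2) := HasSum.zero_add (f := c) hR.hasSum
  have heq : (fun n => ‖blockStep Q R J h x n‖ ^ 2) = fun n => ‖Q (x n)‖ ^ 2 + c n := by
    funext n
    cases n with
    | zero => exact hB.norm_QJ _ _
    | succ k => exact hB.norm_QR _ _
  rw [heq, hsum, add_left_comm]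
  exact hQ.hasSum.add hc

/-- The isometry `(h, x) ↦ (T h, blockStep Q R J h x)` on `H ⊕ ℓ²(E)`. -/
noncomputable def IsIsometricBlock.isometry {T : H →ₗ[ℂ] H} {Q R : E →ₗ[ℂ] E} {J : H →ₗ[ℂ] E}
    (hB : IsIsometricBlock T Q R J) :
    WithLp 2 (H × lp (fun _ : ℕ => E) 2) →ₗᵢ[ℂ] WithLp 2 (H × lp (fun _ : ℕ => E) 2) where
  toFun k := WithLp.toLp 2 (T k.fst,
    ⟨blockStep Q R J k.fst k.snd, memℓp_two_of_summable (hB.hasSum k.fst k.snd).summable⟩)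
  map_add' k l := by
    refine WithLp.ofLp_injective 2 (Prod.ext (by simp) (lp.ext (funext fun n => ?_)))
    cases n <;>
    · simp only [lp.coeFn_add, Pi.add_apply, WithLp.add_fst, WithLp.add_snd, WithLp.ofLp_add,
        Prod.snd_add, blockStep, map_add]
      abel
  map_smul' c k := by
    refine WithLp.ofLp_injective 2 (Prod.ext (by simp) (lp.ext (funext fun n => ?_)))
    cases n <;> simp [blockStep]
  norm_map' k := by
    have hsum := (hB.hasSum k.fst k.snd).unique (lp_two_hasSum_norm_sq
      ⟨_, memℓp_two_of_summable (hB.hasSum k.fst k.snd).summable⟩)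
    rw [← sq_eq_sq₀ (norm_nonneg _) (norm_nonneg _), WithLp.prod_norm_sq_eq_of_L2,
      WithLp.prod_norm_sq_eq_of_L2 k, ← hB.norm_H k.fst, add_assoc, hsum]
    rfl

theorem IsIsometricBlock.isometry_comm {T₁ T₂ : H →ₗ[ℂ] H} {Q₁ R₁ Q₂ R₂ : E →ₗ[ℂ] E}
    {J₁ J₂ : H →ₗ[ℂ] E} (h₁ : IsIsometricBlock T₁ Q₁ R₁ J₁) (h₂ : IsIsometricBlock T₂ Q₂ R₂ J₂)
    (hT : ∀ h, T₁ (T₂ h) = T₂ (T₁ h)) (hQ : ∀ x, Q₁ (Q₂ x) = Q₂ (Q₁ x))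
    (hR : ∀ x, R₁ (R₂ x) = R₂ (R₁ x))
    (hQR : ∀ x, Q₁ (R₂ x) + R₁ (Q₂ x) = Q₂ (R₁ x) + R₂ (Q₁ x))
    (hRJ : ∀ h, R₁ (J₂ h) = R₂ (J₁ h))
    (hQJ : ∀ h, Q₁ (J₂ h) + J₁ (T₂ h) = Q₂ (J₁ h) + J₂ (T₁ h))
    (k : WithLp 2 (H × lp (fun _ : ℕ => E) 2)) :
    h₁.isometry (h₂.isometry k) = h₂.isometry (h₁.isometry k) := by
  refine WithLp.ofLp_injective 2 (Prod.ext (hT _) (lp.ext (funext fun n => ?_)))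
  rcases n with _ | _ | n
  · change Q₁ (Q₂ (k.snd 0) + J₂ k.fst) + J₁ (T₂ k.fst) =
      Q₂ (Q₁ (k.snd 0) + J₁ k.fst) + J₂ (T₁ k.fst)
    rw [map_add, map_add, add_assoc, add_assoc, hQ, hQJ]
  · change Q₁ (Q₂ (k.snd 1) + R₂ (k.snd 0)) + R₁ (Q₂ (k.snd 0) + J₂ k.fst) =
      Q₂ (Q₁ (k.snd 1) + R₁ (k.snd 0)) + R₂ (Q₁ (k.snd 0) + J₁ k.fst)
    simp only [map_add]
    linear_combination (norm := module) hQ (k.snd 1) + hQR (k.snd 0) + hRJ k.fst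
  · change Q₁ (Q₂ (k.snd (n + 2)) + R₂ (k.snd (n + 1))) +
        R₁ (Q₂ (k.snd (n + 1)) + R₂ (k.snd n)) =
      Q₂ (Q₁ (k.snd (n + 2)) + R₁ (k.snd (n + 1))) +
        R₂ (Q₁ (k.snd (n + 1)) + R₁ (k.snd n))
    simp only [map_add]
    linear_combination (norm := module) hQ (k.snd (n + 2)) + hQR (k.snd (n + 1)) + hR (k.snd n)

end Model

/-- Four copies of `H`. -/
abbrev Quad (H : Type*) : Type _ := WithLp 2 (WithLp 2 (H × H) × WithLp 2 (H × H))

/-- The vector of `Quad H` with the given coordinates. -/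
def Quad.mk {H : Type*} (a b c d : H) : Quad H :=
  WithLp.toLp 2 (WithLp.toLp 2 (a, b), WithLp.toLp 2 (c, d))

theorem Quad.norm_sq {H : Type*} [NormedAddCommGroup H] (x : Quad H) :
    ‖x‖ ^ 2 = ‖x.fst.fst‖ ^ 2 + ‖x.fst.snd‖ ^ 2 + (‖x.snd.fst‖ ^ 2 + ‖x.snd.snd‖ ^ 2) := by
  simp only [WithLp.prod_norm_sq_eq_of_L2]

section Ando

variable {H : Type*} [NormedAddCommGroup H] [InnerProductSpace ℂ H]

/-- The partial isometry `(a, b, c, d) ↦ (0, a, 0, c)`. -/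
def Quad.raise : Quad H →ₗ[ℂ] Quad H where
  toFun x := Quad.mk 0 x.fst.fst 0 x.snd.fst
  map_add' x y := by simp [Quad.mk, ← WithLp.toLp_add]
  map_smul' c x := by simp [Quad.mk, ← WithLp.toLp_smul]

/-- The partial isometry `(a, b, c, d) ↦ (b, 0, d, 0)`. -/
def Quad.lower : Quad H →ₗ[ℂ] Quad H where
  toFun x := Quad.mk x.fst.snd 0 x.snd.snd 0
  map_add' x y := by simp [Quad.mk, ← WithLp.toLp_add]
  map_smul' c x := by simp [Quad.mk, ← WithLp.toLp_smul]

/-- The embedding `h ↦ (h, 0, 0, 0)`. -/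
def Quad.incl : H →ₗ[ℂ] Quad H where
  toFun h := Quad.mk h 0 0 0
  map_add' x y := by simp [Quad.mk, ← WithLp.toLp_add]
  map_smul' c x := by simp [Quad.mk, ← WithLp.toLp_smul]

theorem Quad.raise_raise (x : Quad H) : raise (raise x) = 0 := rfl

theorem Quad.lower_lower (x : Quad H) : lower (lower x) = 0 := rfl

theorem Quad.lower_incl (h : H) : lower (incl h) = 0 := rfl

theorem Quad.raise_lower_add (x : Quad H) : raise (lower x) + lower (raise x) = x := by
  refine WithLp.ofLp_injective 2 (Prod.ext (WithLp.ofLp_injective 2 (Prod.ext ?_ ?_))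
    (WithLp.ofLp_injective 2 (Prod.ext ?_ ?_))) <;> simp [raise, lower, mk]

theorem Quad.norm_incl (h : H) : ‖incl h‖ = ‖h‖ := by
  rw [← sq_eq_sq₀ (norm_nonneg _) (norm_nonneg _), norm_sq]
  simp [incl, mk]

theorem Quad.norm_raise_add_lower (x y : Quad H) :
    ‖raise x + lower y‖ ^ 2 = ‖raise x‖ ^ 2 + ‖lower y‖ ^ 2 := by
  simp only [norm_sq]
  simp [raise, lower, mk]
  ring

theorem Quad.norm_raise_add_incl (x : Quad H) (h : H) :
    ‖raise x + incl h‖ ^ 2 = ‖raise x‖ ^ 2 + ‖incl h‖ ^ 2 := by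
  simp only [norm_sq]
  simp [raise, incl, mk]
  ring

theorem Quad.norm_raise_sq_add_norm_lower_sq (x : Quad H) :
    ‖raise x‖ ^ 2 + ‖lower x‖ ^ 2 = ‖x‖ ^ 2 := by
  simp only [norm_sq]
  simp [raise, lower, mk]
  ring

/-- The isometric block obtained from a defect operator, followed by a unitary. -/
theorem isIsometricBlock_left {T D : H →ₗ[ℂ] H} (hD : ∀ h, ‖T h‖ ^ 2 + ‖D h‖ ^ 2 = ‖h‖ ^ 2)
    (g : Quad H ≃ₗᵢ[ℂ] Quad H) :
    IsIsometricBlock T (g.toLinearEquiv.toLinearMap ∘ₗ Quad.raise)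
      (g.toLinearEquiv.toLinearMap ∘ₗ Quad.lower)
      (g.toLinearEquiv.toLinearMap ∘ₗ Quad.incl ∘ₗ D) where
  norm_QR x y := by simp [← map_add, Quad.norm_raise_add_lower]
  norm_QJ x h := by simp [← map_add, Quad.norm_raise_add_incl]
  norm_E x := by simp [Quad.norm_raise_sq_add_norm_lower_sq]
  norm_H h := by simp [Quad.norm_incl, hD]

/-- The isometric block obtained from a defect operator, preceded by a unitary. -/
theorem isIsometricBlock_right {T D : H →ₗ[ℂ] H} (hD : ∀ h, ‖T h‖ ^ 2 + ‖D h‖ ^ 2 = ‖h‖ ^ 2)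
    (g : Quad H ≃ₗᵢ[ℂ] Quad H) :
    IsIsometricBlock T (Quad.raise ∘ₗ g.toLinearEquiv.toLinearMap)
      (Quad.lower ∘ₗ g.toLinearEquiv.toLinearMap) (Quad.incl ∘ₗ D) where
  norm_QR x y := Quad.norm_raise_add_lower _ _
  norm_QJ x h := Quad.norm_raise_add_incl _ _
  norm_E x := by simp [Quad.norm_raise_sq_add_norm_lower_sq]
  norm_H h := by simp [Quad.norm_incl, hD]

end Ando

/-- **Andô's theorem**: commuting contractions have commuting isometric coextensions. -/
theorem exists_commuting_isometric_coextension
    {H : Type*} [NormedAddCommGroup H] [InnerProductSpace ℂ H] [CompleteSpace H]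
    (T₁ T₂ : H →L[ℂ] H) (hT₁ : ‖T₁‖ ≤ 1) (hT₂ : ‖T₂‖ ≤ 1) (hcomm : T₁ ∘L T₂ = T₂ ∘L T₁) :
    ∃ V₁ V₂ : WithLp 2 (H × lp (fun _ : ℕ => Quad H) 2) →ₗᵢ[ℂ]
        WithLp 2 (H × lp (fun _ : ℕ => Quad H) 2),
      (∀ k, V₁ (V₂ k) = V₂ (V₁ k)) ∧
      (∀ k, (V₁ k).fst = T₁ k.fst) ∧ (∀ k, (V₂ k).fst = T₂ k.fst) := by
  obtain ⟨D₁, hD₁⟩ := exists_defect T₁ hT₁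
  obtain ⟨D₂, hD₂⟩ := exists_defect T₂ hT₂
  have hc (h : H) : T₁ (T₂ h) = T₂ (T₁ h) := congr($hcomm h)
  let pair (A B : H →L[ℂ] H) : H →ₗ[ℂ] WithLp 2 (H × H) :=
    (WithLp.linearEquiv 2 ℂ (H × H)).symm.toLinearMap ∘ₗ (A : H →ₗ[ℂ] H).prod B
  obtain ⟨g, hg⟩ := exists_linearIsometryEquiv_extending
    (pair (D₁ ∘L T₂) D₂) (pair (D₂ ∘L T₁) D₁) fun h => by
      rw [← sq_eq_sq₀ (norm_nonneg _) (norm_nonneg _), WithLp.prod_norm_sq_eq_of_L2,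
        WithLp.prod_norm_sq_eq_of_L2]
      change ‖D₁ (T₂ h)‖ ^ 2 + ‖D₂ h‖ ^ 2 = ‖D₂ (T₁ h)‖ ^ 2 + ‖D₁ h‖ ^ 2
      have := congr(‖$(hc h)‖ ^ 2)
      linarith [hD₁ h, hD₂ h, hD₁ (T₂ h), hD₂ (T₁ h)]
  have hg' (h : H) : g (Quad.mk (D₁ (T₂ h)) (D₂ h) 0 0) = Quad.mk (D₂ (T₁ h)) (D₁ h) 0 0 := hg h
  have hmk (a b : H) : Quad.raise (Quad.incl b) + Quad.incl a = Quad.mk a b 0 0 := by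
    refine WithLp.ofLp_injective 2 (Prod.ext (WithLp.ofLp_injective 2 (Prod.ext ?_ ?_))
      (WithLp.ofLp_injective 2 (Prod.ext ?_ ?_))) <;> simp [Quad.raise, Quad.incl, Quad.mk]
  have h₁ := isIsometricBlock_left (T := T₁) (D := D₁) hD₁ g
  have h₂ := isIsometricBlock_right (T := T₂) (D := D₂) hD₂ g.symm
  refine ⟨h₁.isometry, h₂.isometry, h₁.isometry_comm h₂ hc ?_ ?_ ?_ ?_ ?_,
    fun _ => rfl, fun _ => rfl⟩
  · intro x
    simp [Quad.raise_raise]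
  · intro x
    simp [Quad.lower_lower]
  · intro x
    simp [← map_add, Quad.raise_lower_add]
  · intro h
    simp [Quad.lower_incl]
  · intro h
    simp [← map_add, hmk, hg']

/-- If isometric coextensions `U₁, U₂` of `T₁, T₂` commute, then the common orthogonal complement
of their fixed spaces carries a dilation without fixed vectors. -/
theorem exists_dilation_of_coextension
    {H K : Type} [NormedAddCommGroup H] [InnerProductSpace ℂ H] [CompleteSpace H]
    [NormedAddCommGroup K] [InnerProductSpace ℂ K] [CompleteSpace K]
    (T₁ T₂ : H →L[ℂ] H) (hT₁ : ∀ x, T₁ x = x → x = 0) (hT₂ : ∀ x, T₂ x = x → x = 0)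
    (ι : H →L[ℂ] K) (U₁ U₂ : K →L[ℂ] K) (hι : ∀ h, ‖ι h‖ = ‖h‖)
    (hU₁ : ∀ x, ‖U₁ x‖ = ‖x‖) (hU₂ : ∀ x, ‖U₂ x‖ = ‖x‖) (hcomm : U₁ ∘L U₂ = U₂ ∘L U₁)
    (hTU₁ : ∀ k, adjoint ι (U₁ k) = T₁ (adjoint ι k))
    (hTU₂ : ∀ k, adjoint ι (U₂ k) = T₂ (adjoint ι k)) :
    ∃ (G : Type) (_ : NormedAddCommGroup G) (_ : InnerProductSpace ℂ G)
      (_ : CompleteSpace G) (κ : H →L[ℂ] G) (V₁ V₂ : G →L[ℂ] G),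
      (∀ h : H, ‖κ h‖ = ‖h‖) ∧
      (∀ x : G, ‖V₁ x‖ = ‖x‖) ∧ (∀ x : G, ‖V₂ x‖ = ‖x‖) ∧
      V₁ ∘L V₂ = V₂ ∘L V₁ ∧
      (∀ m n : ℕ, T₁ ^ m * T₂ ^ n = adjoint κ ∘L (V₁ ^ m * V₂ ^ n) ∘L κ) ∧
      (∀ x : G, V₁ x = x → x = 0) ∧ (∀ x : G, V₂ x = x → x = 0) := by
  let N : Submodule ℂ K := (LinearMap.ker (U₁ - 1).toLinearMap)ᗮ ⊓
    (LinearMap.ker (U₂ - 1).toLinearMap)ᗮ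
  have hmem (x : K) : x ∈ N ↔
      (∀ m, U₁ m = m → inner ℂ m x = 0) ∧ ∀ m, U₂ m = m → inner ℂ m x = 0 := by
    simp [N, Submodule.mem_orthogonal, sub_eq_zero]
  have : CompleteSpace N :=
    ((Submodule.isClosed_orthogonal _).inter (Submodule.isClosed_orthogonal _)).completeSpace_coe
  have hN₁ (x : N) : U₁ x ∈ N := (hmem _).2
    ⟨fun _ => inner_apply_eq_zero_of_commute_isometry hU₁ rfl ((hmem x).1 x.2).1,
      fun _ => inner_apply_eq_zero_of_commute_isometry hU₂ hcomm.symm ((hmem x).1 x.2).2⟩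
  have hN₂ (x : N) : U₂ x ∈ N := (hmem _).2
    ⟨fun _ => inner_apply_eq_zero_of_commute_isometry hU₁ hcomm ((hmem x).1 x.2).1,
      fun _ => inner_apply_eq_zero_of_commute_isometry hU₂ rfl ((hmem x).1 x.2).2⟩
  have hNι (h : H) : ι h ∈ N := by
    refine (hmem _).2 ⟨fun m hm => ?_, fun m hm => ?_⟩
    · rw [← adjoint_inner_left, hT₁ (adjoint ι m) (by rw [← hTU₁, hm]), inner_zero_left]
    · rw [← adjoint_inner_left, hT₂ (adjoint ι m) (by rw [← hTU₂, hm]), inner_zero_left]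
  let κ : H →L[ℂ] N := ι.codRestrict N hNι
  let V₁ : N →L[ℂ] N := (U₁ ∘L N.subtypeL).codRestrict N hN₁
  let V₂ : N →L[ℂ] N := (U₂ ∘L N.subtypeL).codRestrict N hN₂
  have hκ (x : N) : adjoint κ x = adjoint ι x :=
    ext_inner_left ℂ fun h => by
      rw [adjoint_inner_right, adjoint_inner_right]
      rfl
  have hκκ : adjoint κ ∘L κ = 1 := (norm_map_iff_adjoint_comp_self κ).1 hι
  have hVT₁ (x : N) : adjoint κ (V₁ x) = T₁ (adjoint κ x) := by
    rw [hκ, hκ]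
    exact hTU₁ x
  have hVT₂ (x : N) : adjoint κ (V₂ x) = T₂ (adjoint κ x) := by
    rw [hκ, hκ]
    exact hTU₂ x
  have hpow {T : H →L[ℂ] H} {V : N →L[ℂ] N} (hVT : ∀ x, adjoint κ (V x) = T (adjoint κ x))
      (m : ℕ) (x : N) : adjoint κ ((V ^ m) x) = (T ^ m) (adjoint κ x) := by
    induction m with
    | zero => rfl
    | succ m ih => rw [pow_succ', pow_succ', mul_apply_eq_comp, mul_apply_eq_comp, hVT, ih]
  refine ⟨N, inferInstance, inferInstance, inferInstance, κ, V₁, V₂, hι, fun x => hU₁ x,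
    fun x => hU₂ x, ?_, fun m n => ?_, fun x hx => ?_, fun x hx => ?_⟩
  · ext x
    exact congr($hcomm x)
  · ext h
    simp only [comp_apply, mul_apply_eq_comp, hpow hVT₁, hpow hVT₂]
    rw [show adjoint κ (κ h) = h from congr($hκκ h)]
  · exact Subtype.ext (inner_self_eq_zero.1 (((hmem x).1 x.2).1 x congr(($hx : K))))
  · exact Subtype.ext (inner_self_eq_zero.1 (((hmem x).1 x.2).2 x congr(($hx : K))))

/-- Two commuting contractions on a complex Hilbert space, neither of which has `1`
as an eigenvalue, have a commuting isometric dilation `(G, U₁, U₂)` in which neither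
isometry has `1` as an eigenvalue. -/
theorem isometric_dilation_without_eigenvalue_one
    {H : Type} [NormedAddCommGroup H] [InnerProductSpace ℂ H] [CompleteSpace H]
    (T₁ T₂ : H →L[ℂ] H)
    (hT₁contr : ‖T₁‖ ≤ 1) (hT₂contr : ‖T₂‖ ≤ 1)
    (hcomm : T₁ ∘L T₂ = T₂ ∘L T₁)
    (hT₁ev : ∀ x : H, T₁ x = x → x = 0)
    (hT₂ev : ∀ x : H, T₂ x = x → x = 0) :
    ∃ (G : Type) (_ : NormedAddCommGroup G) (_ : InnerProductSpace ℂ G)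
      (_ : CompleteSpace G) (ι : H →L[ℂ] G) (U₁ U₂ : G →L[ℂ] G),
      -- `ι` is an isometric embedding of `H` into `G`
      (∀ h : H, ‖ι h‖ = ‖h‖) ∧
      -- `U₁`, `U₂` are isometries
      (∀ x : G, ‖U₁ x‖ = ‖x‖) ∧ (∀ x : G, ‖U₂ x‖ = ‖x‖) ∧
      -- which commute
      U₁ ∘L U₂ = U₂ ∘L U₁ ∧
      -- dilation property: `T₁^m T₂^n = P_H U₁^m U₂^n |_H`
      (∀ m n : ℕ, T₁ ^ m * T₂ ^ n = adjoint ι ∘L (U₁ ^ m * U₂ ^ n) ∘L ι) ∧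
      -- neither `U₁` nor `U₂` has `1` as an eigenvalue
      (∀ x : G, U₁ x = x → x = 0) ∧ (∀ x : G, U₂ x = x → x = 0) := by
  obtain ⟨V₁, V₂, hV, hV₁, hV₂⟩ :=
    exists_commuting_isometric_coextension T₁ T₂ hT₁contr hT₂contr hcomm
  let ι : H →ₗᵢ[ℂ] WithLp 2 (H × lp (fun _ : ℕ => Quad H) 2) :=
    { toFun := fun h => WithLp.toLp 2 (h, 0)
      map_add' := fun x y => by simp [← WithLp.toLp_add]
      map_smul' := fun c x => by simp [← WithLp.toLp_smul]
      norm_map' := fun h => WithLp.norm_toLp_fst 2 _ _ h }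
  have hι (k : WithLp 2 (H × lp (fun _ : ℕ => Quad H) 2)) :
      adjoint ι.toContinuousLinearMap k = k.fst :=
    ext_inner_left ℂ fun h => by
      rw [adjoint_inner_right, WithLp.prod_inner_apply]
      simp [ι]
  exact exists_dilation_of_coextension T₁ T₂ hT₁ev hT₂ev ι.toContinuousLinearMap
    V₁.toContinuousLinearMap V₂.toContinuousLinearMap ι.norm_map V₁.norm_map V₂.norm_map
    (ContinuousLinearMap.ext hV) (fun k => by simpa [hι] using hV₁ k)
    (fun k => by simpa [hι] using hV₂ k)
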